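/- arXiv:math/9802035 — 2 statements merged into one kernel-verified Lean document; each statement's English description precedes it below -/
import Mathlib

section
/- For every nonzero p ∈ ℝ³, ∫_{ℝ³} |p − p'|⁻² |p'|^{−3/2} dp' = 4π² |p|^{−1/2}. -/
open MeasureTheory

open Set Real Module

/-- Euler's integral for the Gamma function, as a Lebesgue integral. -/
theorem lintegral_rpow_mul_exp_neg_mul {a r : ℝ} (ha : 0 < a) (hr : 0 < r) :
    ∫⁻ t in Ioi (0 : ℝ), ENNReal.ofReal (t ^ (a - 1) * exp (-(r * t))) =
      ENNReal.ofReal (Gamma a * r ^ (-a)) := by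
  have h := integral_rpow_mul_exp_neg_mul_Ioi ha hr
  have hpos : 0 < (1 / r) ^ a * Gamma a := by
    have := Gamma_pos_of_pos ha
    positivity
  rw [← ofReal_integral_eq_lintegral_ofReal, h]
  · rw [one_div, inv_rpow hr.le, rpow_neg hr.le, mul_comm]
  · by_contra hn
    rw [integral_undef hn] at h
    exact hpos.ne h
  · filter_upwards [ae_restrict_mem measurableSet_Ioi] with t ht
    have : 0 < t := ht
    positivity

/-- The second Euler integral for the Beta function, as a Lebesgue integral. -/
theorem lintegral_rpow_mul_one_add_rpow {a b : ℝ} (ha : 0 < a) (hb : 0 < b) :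
    ∫⁻ s in Ioi (0 : ℝ), ENNReal.ofReal (s ^ (a - 1) * (1 + s) ^ (-(a + b))) =
      ENNReal.ofReal (Gamma a * Gamma b / Gamma (a + b)) := by
  have hab : 0 < a + b := add_pos ha hb
  have hG := Gamma_pos_of_pos hab
  have hGa := Gamma_pos_of_pos ha
  have hswap : ENNReal.ofReal (Gamma (a + b)) *
      ∫⁻ s in Ioi (0 : ℝ), ENNReal.ofReal (s ^ (a - 1) * (1 + s) ^ (-(a + b))) =
      ENNReal.ofReal (Gamma a * Gamma b) := by
    calc
      _ = ∫⁻ s in Ioi (0 : ℝ), ∫⁻ x in Ioi (0 : ℝ),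
          ENNReal.ofReal (s ^ (a - 1) * (x ^ (a + b - 1) * exp (-((1 + s) * x)))) := by
        rw [← lintegral_const_mul' _ _ ENNReal.ofReal_ne_top]
        refine setLIntegral_congr_fun measurableSet_Ioi fun s (hs : 0 < s) => ?_
        have hs' : 0 ≤ s ^ (a - 1) := by positivity
        simp only [ENNReal.ofReal_mul hs']
        rw [lintegral_const_mul' _ _ ENNReal.ofReal_ne_top,
          lintegral_rpow_mul_exp_neg_mul hab (by positivity), ENNReal.ofReal_mul hG.le]
        ring
      _ = ∫⁻ x in Ioi (0 : ℝ), ∫⁻ s in Ioi (0 : ℝ),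
          ENNReal.ofReal (s ^ (a - 1) * (x ^ (a + b - 1) * exp (-((1 + s) * x)))) :=
        lintegral_lintegral_swap (Measurable.aemeasurable (by unfold Function.uncurry; fun_prop))
      _ = ∫⁻ x in Ioi (0 : ℝ),
          ENNReal.ofReal (Gamma a) * ENNReal.ofReal (x ^ (b - 1) * exp (-(1 * x))) := by
        refine setLIntegral_congr_fun measurableSet_Ioi fun x (hx : 0 < x) => ?_
        have hx' : 0 ≤ x ^ (a + b - 1) * exp (-x) := by positivity
        have hfac (s : ℝ) : s ^ (a - 1) * (x ^ (a + b - 1) * exp (-((1 + s) * x))) =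
            (x ^ (a + b - 1) * exp (-x)) * (s ^ (a - 1) * exp (-(x * s))) := by
          rw [show -((1 + s) * x) = -x + -(x * s) by ring, exp_add]
          ring
        simp only [hfac, ENNReal.ofReal_mul hx']
        rw [lintegral_const_mul' _ _ ENNReal.ofReal_ne_top,
          lintegral_rpow_mul_exp_neg_mul ha hx, ← ENNReal.ofReal_mul hx',
          ← ENNReal.ofReal_mul hGa.le, show b - 1 = (a + b - 1) + -a by ring, rpow_add hx]
        ring_nf
      _ = _ := by
        rw [lintegral_const_mul' _ _ ENNReal.ofReal_ne_top,
          lintegral_rpow_mul_exp_neg_mul hb one_pos, one_rpow, mul_one,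
          ← ENNReal.ofReal_mul hGa.le]
  rw [ENNReal.ofReal_div_of_pos hG, ← hswap, mul_comm,
    ENNReal.mul_div_cancel_right (by simpa using hG) ENNReal.ofReal_ne_top]

/-- The integral of a product of two Gaussians centred at `p` and at the origin. -/
theorem lintegral_exp_neg_mul_sq_norm_sub_mul {V : Type*} [NormedAddCommGroup V]
    [InnerProductSpace ℝ V] [FiniteDimensional ℝ V] [MeasurableSpace V] [BorelSpace V]
    (p : V) {s t : ℝ} (hst : 0 < s + t) :
    ∫⁻ q : V, ENNReal.ofReal (exp (-(s * ‖p - q‖ ^ 2 + t * ‖q‖ ^ 2))) =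
      ENNReal.ofReal
        ((π / (s + t)) ^ (finrank ℝ V / 2 : ℝ) * exp (-(s * t / (s + t) * ‖p‖ ^ 2))) := by
  have hsq (q : V) : exp (-(s * ‖p - q‖ ^ 2 + t * ‖q‖ ^ 2)) =
      exp (-(s * t / (s + t) * ‖p‖ ^ 2)) * exp (-(s + t) * ‖q - (s / (s + t)) • p‖ ^ 2) := by
    rw [← exp_add, norm_sub_sq_real, norm_sub_sq_real, norm_smul, inner_smul_right,
      real_inner_comm, mul_pow, norm_eq_abs, sq_abs]
    congr 1
    field_simp
    ring
  have hgauss := GaussianFourier.integral_rexp_neg_mul_sq_norm (V := V) hst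
  have hpos : 0 < (π / (s + t)) ^ (finrank ℝ V / 2 : ℝ) := by positivity
  simp only [hsq, ENNReal.ofReal_mul (exp_nonneg _)]
  rw [lintegral_const_mul' _ _ ENNReal.ofReal_ne_top,
    lintegral_sub_right_eq_self (μ := volume)
      (fun q : V => ENNReal.ofReal (exp (-(s + t) * ‖q‖ ^ 2))),
    ← ofReal_integral_eq_lintegral_ofReal, hgauss, ENNReal.ofReal_mul hpos.le, mul_comm]
  · by_contra hn
    rw [integral_undef hn] at hgauss
    exact hpos.ne hgauss
  · exact ae_of_all _ fun q => exp_nonneg _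

/-- Schwinger parametrization of the product of the two Riesz kernels. -/
theorem lintegral_schwinger_parametrization {u v : ℝ} (hu : 0 < u) (hv : 0 < v) :
    ∫⁻ t in Ioi (0 : ℝ), ∫⁻ s in Ioi (0 : ℝ),
      ENNReal.ofReal (t ^ (3 / 4 : ℝ) * exp (-(t * s * u ^ 2 + t * v ^ 2))) =
      ENNReal.ofReal (Gamma (3 / 4)) *
        ENNReal.ofReal (u ^ (-2 : ℝ) * v ^ (-(3 : ℝ) / 2)) := by
  have hG : 0 < Gamma (3 / 4) := Gamma_pos_of_pos (by norm_num)
  have hinner : ∀ t ∈ Ioi (0 : ℝ), ∫⁻ s in Ioi (0 : ℝ),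
      ENNReal.ofReal (t ^ (3 / 4 : ℝ) * exp (-(t * s * u ^ 2 + t * v ^ 2))) =
      ENNReal.ofReal (u ^ (-2 : ℝ)) *
        ENNReal.ofReal (t ^ (3 / 4 - 1 : ℝ) * exp (-(v ^ 2 * t))) := by
    intro t (ht : 0 < t)
    have ht' : 0 ≤ t ^ (3 / 4 : ℝ) * exp (-(v ^ 2 * t)) := by positivity
    have hfac (s : ℝ) : t ^ (3 / 4 : ℝ) * exp (-(t * s * u ^ 2 + t * v ^ 2)) =
        (t ^ (3 / 4 : ℝ) * exp (-(v ^ 2 * t))) *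
          (s ^ ((1 : ℝ) - 1) * exp (-(t * u ^ 2 * s))) := by
      rw [sub_self, rpow_zero, one_mul, mul_assoc (t ^ (3 / 4 : ℝ)), ← exp_add]
      ring_nf
    simp only [hfac, ENNReal.ofReal_mul ht']
    rw [lintegral_const_mul' _ _ ENNReal.ofReal_ne_top,
      lintegral_rpow_mul_exp_neg_mul one_pos (by positivity), ← ENNReal.ofReal_mul ht',
      ← ENNReal.ofReal_mul (by positivity), Gamma_one, rpow_sub ht, rpow_one,
      rpow_neg_one, rpow_neg hu.le, rpow_two]
    congr 1
    field_simp
  rw [setLIntegral_congr_fun measurableSet_Ioi hinner,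
    lintegral_const_mul' _ _ ENNReal.ofReal_ne_top,
    lintegral_rpow_mul_exp_neg_mul (by norm_num) (by positivity),
    ← ENNReal.ofReal_mul (by positivity), ← ENNReal.ofReal_mul hG.le,
    ← rpow_natCast v 2, ← rpow_mul hv.le]
  congr 1
  norm_num
  ring

theorem lintegral_riesz_kernel_mul (p : EuclideanSpace ℝ (Fin 3)) (hp : p ≠ 0) :
    ∫⁻ q : EuclideanSpace ℝ (Fin 3),
      ENNReal.ofReal (‖p - q‖ ^ (-2 : ℝ) * ‖q‖ ^ (-(3 : ℝ) / 2)) =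
      ENNReal.ofReal (4 * π ^ 2 * ‖p‖ ^ (-(1 : ℝ) / 2)) := by
  have hP : 0 < ‖p‖ := norm_pos_iff.mpr hp
  have hG : 0 < Gamma (3 / 4) := Gamma_pos_of_pos (by norm_num)
  have hG' : 0 < Gamma (1 / 4) := Gamma_pos_of_pos (by norm_num)
  let F (q : EuclideanSpace ℝ (Fin 3)) (t s : ℝ) : ENNReal :=
    ENNReal.ofReal (t ^ (3 / 4 : ℝ) * exp (-(t * s * ‖p - q‖ ^ 2 + t * ‖q‖ ^ 2)))
  have hspace : ∀ s ∈ Ioi (0 : ℝ), ∀ t ∈ Ioi (0 : ℝ), ∫⁻ q, F q t s =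
      ENNReal.ofReal (π ^ (3 / 2 : ℝ) * (1 + s) ^ (-(3 / 2) : ℝ)) *
        ENNReal.ofReal (t ^ (1 / 4 - 1 : ℝ) * exp (-(s / (1 + s) * ‖p‖ ^ 2 * t))) := by
    intro s (hs : 0 < s) t (ht : 0 < t)
    have ht' : 0 ≤ t ^ (3 / 4 : ℝ) := by positivity
    simp only [F, ENNReal.ofReal_mul ht']
    rw [lintegral_const_mul' _ _ ENNReal.ofReal_ne_top,
      lintegral_exp_neg_mul_sq_norm_sub_mul p (by positivity), ← ENNReal.ofReal_mul ht',
      ← ENNReal.ofReal_mul (by positivity), finrank_euclideanSpace_fin,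
      show t * s + t = t * (1 + s) by ring, div_rpow pi_nonneg (by positivity),
      mul_rpow ht.le (by positivity), rpow_neg (by positivity),
      show (1 / 4 - 1 : ℝ) = 3 / 4 - 3 / 2 by norm_num, rpow_sub ht,
      show t * s * t / (t * (1 + s)) * ‖p‖ ^ 2 = s / (1 + s) * ‖p‖ ^ 2 * t by field_simp]
    congr 1
    push_cast
    ring
  have hscale : ∀ s ∈ Ioi (0 : ℝ), ∫⁻ t in Ioi (0 : ℝ), ∫⁻ q, F q t s =
      ENNReal.ofReal (π ^ (3 / 2 : ℝ) * Gamma (1 / 4) * ‖p‖ ^ (-(1 : ℝ) / 2)) *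
        ENNReal.ofReal (s ^ (3 / 4 - 1 : ℝ) * (1 + s) ^ (-(3 / 4 + 1 / 2) : ℝ)) := by
    intro s hs
    rw [setLIntegral_congr_fun measurableSet_Ioi (hspace s hs)]
    replace hs : 0 < s := hs
    have hs1 : 0 < 1 + s := by positivity
    rw [lintegral_const_mul' _ _ ENNReal.ofReal_ne_top,
      lintegral_rpow_mul_exp_neg_mul (by norm_num) (by positivity),
      ← ENNReal.ofReal_mul (by positivity), ← ENNReal.ofReal_mul (by positivity),
      mul_rpow (by positivity) (by positivity), div_rpow hs.le hs1.le,
      ← rpow_natCast ‖p‖ 2, ← rpow_mul hP.le,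
      show (-(3 / 4 + 1 / 2) : ℝ) = -(3 / 2) - -(1 / 4) by norm_num, rpow_sub hs1,
      show (3 / 4 - 1 : ℝ) = -(1 / 4) by norm_num,
      show ((2 : ℕ) : ℝ) * -(1 / 4) = -1 / 2 by norm_num]
    congr 1
    ring
  have hmain : ENNReal.ofReal (Gamma (3 / 4)) * ∫⁻ q : EuclideanSpace ℝ (Fin 3),
      ENNReal.ofReal (‖p - q‖ ^ (-2 : ℝ) * ‖q‖ ^ (-(3 : ℝ) / 2)) =
      ENNReal.ofReal (Gamma (3 / 4)) *
        ENNReal.ofReal (4 * π ^ 2 * ‖p‖ ^ (-(1 : ℝ) / 2)) := by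
    calc
      _ = ∫⁻ q, ∫⁻ t in Ioi (0 : ℝ), ∫⁻ s in Ioi (0 : ℝ), F q t s := by
        rw [← lintegral_const_mul' _ _ ENNReal.ofReal_ne_top]
        refine lintegral_congr_ae ?_
        filter_upwards [Measure.ae_ne volume 0, Measure.ae_ne volume p] with q hq0 hqp
        exact (lintegral_schwinger_parametrization
          (norm_pos_iff.mpr (sub_ne_zero.mpr hqp.symm)) (norm_pos_iff.mpr hq0)).symm
      _ = ∫⁻ t in Ioi (0 : ℝ), ∫⁻ q, ∫⁻ s in Ioi (0 : ℝ), F q t s :=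
        lintegral_lintegral_swap (Measurable.aemeasurable
          (Measurable.lintegral_prod_right'
            (f := fun x : ((EuclideanSpace ℝ (Fin 3)) × ℝ) × ℝ => F x.1.1 x.1.2 x.2)
            (by fun_prop)))
      _ = ∫⁻ t in Ioi (0 : ℝ), ∫⁻ s in Ioi (0 : ℝ), ∫⁻ q, F q t s :=
        lintegral_congr fun t => lintegral_lintegral_swap
          (Measurable.aemeasurable (by unfold Function.uncurry; fun_prop))
      _ = ∫⁻ s in Ioi (0 : ℝ), ∫⁻ t in Ioi (0 : ℝ), ∫⁻ q, F q t s :=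
        lintegral_lintegral_swap (Measurable.aemeasurable
          (Measurable.lintegral_prod_right'
            (f := fun x : (ℝ × ℝ) × (EuclideanSpace ℝ (Fin 3)) => F x.2 x.1.1 x.1.2)
            (by fun_prop)))
      _ = _ := by
        rw [setLIntegral_congr_fun measurableSet_Ioi hscale,
          lintegral_const_mul' _ _ ENNReal.ofReal_ne_top,
          lintegral_rpow_mul_one_add_rpow (by norm_num) (by norm_num),
          ← ENNReal.ofReal_mul (by positivity), ← ENNReal.ofReal_mul hG.le,
          show (3 / 4 + 1 / 2 : ℝ) = 1 / 4 + 1 by norm_num, Gamma_add_one (by norm_num),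
          Gamma_one_half_eq, sqrt_eq_rpow]
        congr 1
        have hpi : π ^ (3 / 2 : ℝ) * π ^ (1 / 2 : ℝ) = π ^ 2 := by
          rw [← rpow_add pi_pos, ← rpow_natCast]
          norm_num
        rw [← hpi]
        field_simp
  exact (ENNReal.mul_right_inj (by simpa using hG) ENNReal.ofReal_ne_top).mp hmain

theorem stmt_3 (p : EuclideanSpace ℝ (Fin 3)) (hp : p ≠ 0) :
    ∫ p' : EuclideanSpace ℝ (Fin 3), ‖p - p'‖ ^ (-2 : ℝ) * ‖p'‖ ^ (-(3 : ℝ) / 2) =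
      4 * Real.pi ^ 2 * ‖p‖ ^ (-(1 : ℝ) / 2) := by
  rw [integral_eq_lintegral_of_nonneg_ae (ae_of_all _ fun q => by positivity)
    (Measurable.aestronglyMeasurable (by fun_prop)), lintegral_riesz_kernel_mul p hp,
    ENNReal.toReal_ofReal (by positivity)]
end

section
/- For every nonzero p ∈ ℝ³, ∫_{ℝ³} |p − p'|⁻² |p'|^{−5/2} dp' = 4π² |p|^{−3/2}. -/
open MeasureTheory

theorem lintegral_rpow_mul_exp_neg_mul_Ioi {a r : ℝ} (ha : 0 < a) (hr : 0 < r) :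
    ∫⁻ t in Set.Ioi (0 : ℝ), ENNReal.ofReal (t ^ (a - 1) * Real.exp (-(r * t))) =
      ENNReal.ofReal (r ^ (-a) * Real.Gamma a) := by
  have h := Real.integral_rpow_mul_exp_neg_mul_Ioi ha hr
  have hpos : 0 < (1 / r) ^ a * Real.Gamma a :=
    mul_pos (Real.rpow_pos_of_pos (by positivity) _) (Real.Gamma_pos_of_pos ha)
  rw [← ofReal_integral_eq_lintegral_ofReal, h, one_div, Real.inv_rpow hr.le, Real.rpow_neg hr.le]
  · exact not_imp_comm.1 integral_undef (by rw [h]; exact hpos.ne')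
  · filter_upwards [ae_restrict_mem measurableSet_Ioi] with t ht
    have : (0 : ℝ) < t := ht
    positivity

/-- The integral over `y` of the product of two Gaussians centred at `0` and at `p`. -/
theorem lintegral_exp_neg_mul_sq_norm_mul_exp_neg_mul_sq_norm_sub
    {V : Type*} [NormedAddCommGroup V] [InnerProductSpace ℝ V] [FiniteDimensional ℝ V]
    [MeasurableSpace V] [BorelSpace V] {s t : ℝ} (hs : 0 < s) (ht : 0 < t) (p : V) :
    ∫⁻ y : V, ENNReal.ofReal (Real.exp (-(s * ‖y‖ ^ 2)) * Real.exp (-(t * ‖p - y‖ ^ 2))) =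
      ENNReal.ofReal ((Real.pi / (s + t)) ^ (Module.finrank ℝ V / 2 : ℝ) *
        Real.exp (-(s * t / (s + t) * ‖p‖ ^ 2))) := by
  have hst : 0 < s + t := by positivity
  have hsq (y : V) : Real.exp (-(s * ‖y‖ ^ 2)) * Real.exp (-(t * ‖p - y‖ ^ 2)) =
      Real.exp (-(s + t) * ‖y - (t / (s + t)) • p‖ ^ 2) *
        Real.exp (-(s * t / (s + t) * ‖p‖ ^ 2)) := by
    rw [← Real.exp_add, ← Real.exp_add, norm_sub_sq_real, norm_sub_sq_real, inner_smul_right,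
      norm_smul, Real.norm_of_nonneg (by positivity), real_inner_comm]
    congr 1
    field_simp
    ring
  have h := GaussianFourier.integral_rexp_neg_mul_sq_norm (V := V) hst
  have hpos : 0 < (Real.pi / (s + t)) ^ (Module.finrank ℝ V / 2 : ℝ) :=
    Real.rpow_pos_of_pos (by positivity) _
  have hint : Integrable fun y : V => Real.exp (-(s + t) * ‖y‖ ^ 2) :=
    not_imp_comm.1 integral_undef (by rw [h]; exact hpos.ne')
  simp_rw [hsq]
  rw [← ofReal_integral_eq_lintegral_ofReal, integral_mul_const,
    integral_sub_right_eq_self (fun y : V => Real.exp (-(s + t) * ‖y‖ ^ 2)), h]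
  · exact (hint.comp_sub_right _).mul_const _
  · exact Filter.Eventually.of_forall fun y => by positivity

/-- The integral over `(0, ∞)` of `u ^ (a - 1) * (1 + u) ^ (-b)`, an Euler beta integral. -/
theorem lintegral_rpow_mul_one_add_rpow_Ioi {a b : ℝ} (ha : 0 < a) (hab : a < b) :
    ∫⁻ u in Set.Ioi (0 : ℝ), ENNReal.ofReal (u ^ (a - 1) * ((1 + u) ^ (-b) * Real.Gamma b)) =
      ENNReal.ofReal (Real.Gamma a * Real.Gamma (b - a)) := by
  calc
    _ = ∫⁻ u in Set.Ioi (0 : ℝ), ∫⁻ r in Set.Ioi (0 : ℝ), ENNReal.ofReal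
          (u ^ (a - 1) * (r ^ (b - 1) * Real.exp (-((1 + u) * r)))) := by
      refine setLIntegral_congr_fun measurableSet_Ioi fun u (hu : 0 < u) => ?_
      have hu' : 0 ≤ u ^ (a - 1) := by positivity
      simp only [ENNReal.ofReal_mul hu']
      rw [lintegral_const_mul _ (by fun_prop),
        lintegral_rpow_mul_exp_neg_mul_Ioi (ha.trans hab) (by positivity)]
    _ = ∫⁻ r in Set.Ioi (0 : ℝ), ∫⁻ u in Set.Ioi (0 : ℝ), ENNReal.ofReal
          (u ^ (a - 1) * (r ^ (b - 1) * Real.exp (-((1 + u) * r)))) :=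
      lintegral_lintegral_swap (by fun_prop)
    _ = ∫⁻ r in Set.Ioi (0 : ℝ), ENNReal.ofReal (Real.Gamma a) *
          ENNReal.ofReal (r ^ (b - a - 1) * Real.exp (-(1 * r))) := by
      refine setLIntegral_congr_fun measurableSet_Ioi fun r (hr : 0 < r) => ?_
      have hr' : 0 ≤ r ^ (b - 1) * Real.exp (-r) := by positivity
      have hsplit (u : ℝ) : u ^ (a - 1) * (r ^ (b - 1) * Real.exp (-((1 + u) * r))) =
          r ^ (b - 1) * Real.exp (-r) * (u ^ (a - 1) * Real.exp (-(r * u))) := by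
        rw [show -((1 + u) * r) = -r + -(r * u) by ring, Real.exp_add]
        ring
      simp only [hsplit, ENNReal.ofReal_mul hr']
      rw [lintegral_const_mul _ (by fun_prop), lintegral_rpow_mul_exp_neg_mul_Ioi ha hr,
        ← ENNReal.ofReal_mul hr', ← ENNReal.ofReal_mul (Real.Gamma_pos_of_pos ha).le,
        show b - a - 1 = b - 1 + -a by ring, Real.rpow_add hr, one_mul]
      congr 1
      ring
    _ = _ := by
      rw [lintegral_const_mul _ (by fun_prop),
        lintegral_rpow_mul_exp_neg_mul_Ioi (sub_pos.2 hab) one_pos, Real.one_rpow, one_mul,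
        ← ENNReal.ofReal_mul (Real.Gamma_pos_of_pos ha).le]

/-- Schwinger parametrization of the product of the two powers. -/
theorem lintegral_lintegral_exp_eq_rpow_mul_rpow {x y : ℝ} (hx : 0 < x) (hy : 0 < y) :
    ∫⁻ s in Set.Ioi (0 : ℝ), ∫⁻ u in Set.Ioi (0 : ℝ), ENNReal.ofReal
        (s ^ (5 / 4 : ℝ) * (Real.exp (-(s * y ^ 2)) * Real.exp (-(s * u * x ^ 2)))) =
      ENNReal.ofReal (Real.Gamma (5 / 4)) *
        ENNReal.ofReal (x ^ (-2 : ℝ) * y ^ (-(5 : ℝ) / 2)) := by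
  have hx' : 0 ≤ x ^ (-2 : ℝ) := by positivity
  have hinner : ∀ s ∈ Set.Ioi (0 : ℝ), ∫⁻ u in Set.Ioi (0 : ℝ), ENNReal.ofReal
        (s ^ (5 / 4 : ℝ) * (Real.exp (-(s * y ^ 2)) * Real.exp (-(s * u * x ^ 2)))) =
      ENNReal.ofReal (x ^ (-2 : ℝ)) *
        ENNReal.ofReal (s ^ ((5 / 4 : ℝ) - 1) * Real.exp (-(y ^ 2 * s))) := by
    intro s (hs : 0 < s)
    have hc : 0 ≤ s ^ (5 / 4 : ℝ) * Real.exp (-(s * y ^ 2)) := by positivity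
    have hsplit (u : ℝ) :
        s ^ (5 / 4 : ℝ) * (Real.exp (-(s * y ^ 2)) * Real.exp (-(s * u * x ^ 2))) =
        s ^ (5 / 4 : ℝ) * Real.exp (-(s * y ^ 2)) *
          (u ^ ((1 : ℝ) - 1) * Real.exp (-(s * x ^ 2 * u))) := by
      rw [sub_self, Real.rpow_zero, one_mul, mul_right_comm s u, mul_assoc (s ^ _)]
    simp only [hsplit, ENNReal.ofReal_mul hc]
    rw [lintegral_const_mul _ (by fun_prop),
      lintegral_rpow_mul_exp_neg_mul_Ioi one_pos (by positivity), ← ENNReal.ofReal_mul hc,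
      ← ENNReal.ofReal_mul hx', Real.Gamma_one, Real.rpow_neg_one, Real.rpow_sub hs,
      Real.rpow_one, Real.rpow_neg hx.le, Real.rpow_two, mul_comm s (y ^ 2)]
    congr 1
    field_simp
  rw [setLIntegral_congr_fun measurableSet_Ioi hinner, lintegral_const_mul _ (by fun_prop),
    lintegral_rpow_mul_exp_neg_mul_Ioi (by norm_num) (by positivity), ← ENNReal.ofReal_mul hx',
    ← ENNReal.ofReal_mul (Real.Gamma_pos_of_pos (by norm_num)).le, ← Real.rpow_two,
    ← Real.rpow_mul hy.le]
  congr 1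
  rw [show (2 : ℝ) * -(5 / 4) = -5 / 2 by norm_num]
  ring

theorem lintegral_lintegral_schwinger_kernel {p : EuclideanSpace ℝ (Fin 3)} (hp : p ≠ 0)
    {u : ℝ} (hu : 0 < u) :
    ∫⁻ s in Set.Ioi (0 : ℝ), ∫⁻ y : EuclideanSpace ℝ (Fin 3), ENNReal.ofReal
        (s ^ (5 / 4 : ℝ) * (Real.exp (-(s * ‖y‖ ^ 2)) * Real.exp (-(s * u * ‖p - y‖ ^ 2)))) =
      ENNReal.ofReal (Real.pi ^ (3 / 2 : ℝ) * ‖p‖ ^ (-(3 : ℝ) / 2)) *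
        ENNReal.ofReal (u ^ ((1 / 4 : ℝ) - 1) *
          ((1 + u) ^ (-(3 / 4 : ℝ)) * Real.Gamma (3 / 4))) := by
  have hp' : 0 < ‖p‖ := norm_pos_iff.2 hp
  have hu1 : 0 < 1 + u := by positivity
  have hc : 0 ≤ Real.pi ^ (3 / 2 : ℝ) * (1 + u) ^ (-(3 / 2 : ℝ)) := by positivity
  have hinner : ∀ s ∈ Set.Ioi (0 : ℝ), ∫⁻ y : EuclideanSpace ℝ (Fin 3), ENNReal.ofReal
        (s ^ (5 / 4 : ℝ) * (Real.exp (-(s * ‖y‖ ^ 2)) * Real.exp (-(s * u * ‖p - y‖ ^ 2)))) =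
      ENNReal.ofReal (Real.pi ^ (3 / 2 : ℝ) * (1 + u) ^ (-(3 / 2 : ℝ))) *
        ENNReal.ofReal (s ^ ((3 / 4 : ℝ) - 1) *
          Real.exp (-(u / (1 + u) * ‖p‖ ^ 2 * s))) := by
    intro s (hs : 0 < s)
    have hs' : 0 ≤ s ^ (5 / 4 : ℝ) := by positivity
    simp only [ENNReal.ofReal_mul hs']
    rw [lintegral_const_mul _ (by fun_prop),
      lintegral_exp_neg_mul_sq_norm_mul_exp_neg_mul_sq_norm_sub hs (mul_pos hs hu),
      ← ENNReal.ofReal_mul hs', ← ENNReal.ofReal_mul hc, finrank_euclideanSpace_fin,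
      show s + s * u = s * (1 + u) by ring, Nat.cast_ofNat,
      Real.div_rpow Real.pi_pos.le (by positivity), Real.mul_rpow hs.le hu1.le,
      Real.rpow_neg hu1.le, show (3 / 4 : ℝ) - 1 = 5 / 4 - 3 / 2 by norm_num, Real.rpow_sub hs,
      show s * (s * u) / (s * (1 + u)) * ‖p‖ ^ 2 = u / (1 + u) * ‖p‖ ^ 2 * s by field_simp]
    congr 1
    field_simp
  rw [setLIntegral_congr_fun measurableSet_Ioi hinner, lintegral_const_mul _ (by fun_prop),
    lintegral_rpow_mul_exp_neg_mul_Ioi (by norm_num) (by positivity), ← ENNReal.ofReal_mul hc,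
    ← ENNReal.ofReal_mul (by positivity), Real.mul_rpow (by positivity) (by positivity),
    Real.div_rpow hu.le hu1.le, ← Real.rpow_two, ← Real.rpow_mul hp'.le,
    show (2 : ℝ) * -(3 / 4) = -3 / 2 by norm_num,
    show -(3 / 2 : ℝ) = -(3 / 4) + -(3 / 4) by norm_num, Real.rpow_add hu1,
    show (1 / 4 : ℝ) - 1 = -(3 / 4) by norm_num]
  congr 1
  field_simp

theorem stmt_4 (p : EuclideanSpace ℝ (Fin 3)) (hp : p ≠ 0) :
    ∫ p' : EuclideanSpace ℝ (Fin 3), ‖p - p'‖ ^ (-2 : ℝ) * ‖p'‖ ^ (-(5 : ℝ) / 2) =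
      4 * Real.pi ^ 2 * ‖p‖ ^ (-(3 : ℝ) / 2) := by
  have hG : 0 < Real.Gamma (5 / 4) := Real.Gamma_pos_of_pos (by norm_num)
  have hGamma : Real.Gamma (5 / 4) = 1 / 4 * Real.Gamma (1 / 4) := by
    rw [← Real.Gamma_add_one (by norm_num)]
    norm_num
  have hpi : Real.pi ^ (3 / 2 : ℝ) * √Real.pi = Real.pi ^ 2 := by
    rw [Real.sqrt_eq_rpow, ← Real.rpow_add Real.pi_pos, ← Real.rpow_two]
    norm_num
  have key : ENNReal.ofReal (Real.Gamma (5 / 4)) * ∫⁻ y : EuclideanSpace ℝ (Fin 3),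
        ENNReal.ofReal (‖p - y‖ ^ (-2 : ℝ) * ‖y‖ ^ (-(5 : ℝ) / 2)) =
      ENNReal.ofReal (Real.Gamma (5 / 4)) *
        ENNReal.ofReal (4 * Real.pi ^ 2 * ‖p‖ ^ (-(3 : ℝ) / 2)) := by
    calc
      _ = ∫⁻ y : EuclideanSpace ℝ (Fin 3), ∫⁻ s in Set.Ioi (0 : ℝ), ∫⁻ u in Set.Ioi (0 : ℝ),
            ENNReal.ofReal (s ^ (5 / 4 : ℝ) *
              (Real.exp (-(s * ‖y‖ ^ 2)) * Real.exp (-(s * u * ‖p - y‖ ^ 2)))) := by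
        rw [← lintegral_const_mul _ (by fun_prop)]
        refine lintegral_congr_ae ?_
        filter_upwards [Measure.ae_ne volume 0, Measure.ae_ne volume p] with y hy hyp
        exact (lintegral_lintegral_exp_eq_rpow_mul_rpow (norm_pos_iff.2 (sub_ne_zero.2 hyp.symm))
          (norm_pos_iff.2 hy)).symm
      _ = ∫⁻ s in Set.Ioi (0 : ℝ), ∫⁻ y : EuclideanSpace ℝ (Fin 3), ∫⁻ u in Set.Ioi (0 : ℝ),
            ENNReal.ofReal (s ^ (5 / 4 : ℝ) *
              (Real.exp (-(s * ‖y‖ ^ 2)) * Real.exp (-(s * u * ‖p - y‖ ^ 2)))) :=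
        lintegral_lintegral_swap
          (Measurable.lintegral_prod_right (by fun_prop)).aemeasurable
      _ = ∫⁻ s in Set.Ioi (0 : ℝ), ∫⁻ u in Set.Ioi (0 : ℝ), ∫⁻ y : EuclideanSpace ℝ (Fin 3),
            ENNReal.ofReal (s ^ (5 / 4 : ℝ) *
              (Real.exp (-(s * ‖y‖ ^ 2)) * Real.exp (-(s * u * ‖p - y‖ ^ 2)))) :=
        lintegral_congr fun s => lintegral_lintegral_swap (by fun_prop)
      _ = ∫⁻ u in Set.Ioi (0 : ℝ), ∫⁻ s in Set.Ioi (0 : ℝ), ∫⁻ y : EuclideanSpace ℝ (Fin 3),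
            ENNReal.ofReal (s ^ (5 / 4 : ℝ) *
              (Real.exp (-(s * ‖y‖ ^ 2)) * Real.exp (-(s * u * ‖p - y‖ ^ 2)))) :=
        lintegral_lintegral_swap
          (Measurable.lintegral_prod_right (by fun_prop)).aemeasurable
      _ = _ := by
        rw [setLIntegral_congr_fun measurableSet_Ioi
            fun u hu => lintegral_lintegral_schwinger_kernel hp hu,
          lintegral_const_mul _ (by fun_prop),
          lintegral_rpow_mul_one_add_rpow_Ioi (by norm_num) (by norm_num),
          ← ENNReal.ofReal_mul (by positivity), ← ENNReal.ofReal_mul hG.le,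
          show (3 / 4 : ℝ) - 1 / 4 = 1 / 2 by norm_num, Real.Gamma_one_half_eq, hGamma, ← hpi]
        congr 1
        ring
  rw [integral_eq_lintegral_of_nonneg_ae (Filter.Eventually.of_forall fun y => by positivity)
      (Measurable.aestronglyMeasurable (by fun_prop)),
    (ENNReal.mul_right_inj (ENNReal.ofReal_pos.2 hG).ne' ENNReal.ofReal_ne_top).1 key,
    ENNReal.toReal_ofReal (by positivity)]
end
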